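/- arXiv:1908.11278 — 11 statements merged into one kernel-verified Lean document; each statement's English description precedes it below -/
import Mathlib

section
/- Let λ, μ, ν ∈ ℝ and b, p, x ∈ ℍ. Suppose that for all purely imaginary quaternions β, β′ and every quaternion s one has (λ/2) • ((β*β′ − β′*β) * s * b) + (μ/2) • ((β*β′ − β′*β) * s * p) + (ν/4) • ((β*β′ − β′*β) * s) = β*β′*s*(x*x) − β′*β*s*(x*x). Then x * x = (λ/2) • b + (μ/2) • p + ((ν/4 : ℝ) : ℍ). (Taking x = b this is the quaternionic content of the implication '[B,B] = λB + μP + νJ implies b² = ½λb + ½μp + ¼ν' of the paper's Lemma on the k-module structure; taking x = p it gives the corresponding implication for [P,P].) -/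
/-- Quaternionic content of `[B,B] = λB + μP + νJ ⟹ b² = ½λb + ½μp + ¼ν`
(and, with `x = p`, of the corresponding implication for `[P,P]`) from the
paper's Lemma on the k-module structure of the spinor representation. -/
theorem stmt_1 (l m n : ℝ) (b p x : Quaternion ℝ)
    (H : ∀ β β' s : Quaternion ℝ, β.re = 0 → β'.re = 0 →
      (l/2) • ((β*β' - β'*β) * s * b) + (m/2) • ((β*β' - β'*β) * s * p)
        + (n/4) • ((β*β' - β'*β) * s)
      = β*β'*s*(x*x) - β'*β*s*(x*x)) :
    x * x = (l/2) • b + (m/2) • p + ((n/4 : ℝ) : Quaternion ℝ) := by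
  obtain ⟨β, β', h1, h2, hc⟩ : ∃ β β' : Quaternion ℝ, β.re = 0 ∧ β'.re = 0 ∧
      β * β' - β' * β ≠ 0 := by
    have key : ∀ β β' : Quaternion ℝ, β * β' - β' * β = 0 →
        2 * (β.imI * β'.imJ - β.imJ * β'.imI) = 0 := by
      intro β β' h0
      have h1 : (β * β' - β' * β).imK = (0 : Quaternion ℝ).imK := by rw [h0]
      rw [Quaternion.imK_sub, Quaternion.imK_mul, Quaternion.imK_mul,
        Quaternion.imK_zero] at h1
      linarith
    refine ⟨⟨0, 1, 0, 0⟩, ⟨0, 0, 1, 0⟩, rfl, rfl, ?_⟩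
    intro h0
    have h1 := key _ _ h0
    norm_num at h1
  have h := H β β' 1 h1 h2
  apply mul_left_cancel₀ hc
  have e : ((n/4 : ℝ) : Quaternion ℝ) = (n/4) • (1 : Quaternion ℝ) := by
    rw [← Quaternion.coe_mul_eq_smul, mul_one]
  rw [e, mul_add, mul_add, mul_smul_comm, mul_smul_comm, mul_smul_comm]
  simp only [mul_one] at h ⊢
  rw [h, sub_mul]
end

section
/- Let λ ∈ ℝ and h, b, p ∈ ℍ. Suppose that for all purely imaginary quaternions β, π and every quaternion s one has (−(λ * (β*π).re)) • (s * h) = β*π*s*(p*b) − π*β*s*(b*p). Then b*p + p*b = 0 and b*p − p*b = λ • h. (This is the quaternionic content of the implication '[B,P] = λH implies bp + pb = 0 and [b,p] = λh' of the paper's Lemma on the k-module structure of the spinor representation.) -/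
/-- Quaternionic content of `[B,P] = λH ⟹ bp + pb = 0 and [b,p] = λh`
from the paper's Lemma on the k-module structure of the spinor representation. -/
theorem stmt_2 (l : ℝ) (h b p : Quaternion ℝ)
    (H : ∀ β π s : Quaternion ℝ, β.re = 0 → π.re = 0 →
      (-(l * (β*π).re)) • (s * h) = β*π*s*(p*b) - π*β*s*(b*p)) :
    b*p + p*b = 0 ∧ b*p - p*b = l • h := by
  obtain ⟨u, u0, u1, u2, u3⟩ : ∃ u : Quaternion ℝ, u.re = 0 ∧ u.imI = 1 ∧ u.imJ = 0 ∧ u.imK = 0 :=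
    ⟨⟨0,1,0,0⟩, rfl, rfl, rfl, rfl⟩
  obtain ⟨v, v0, v1, v2, v3⟩ : ∃ u : Quaternion ℝ, u.re = 0 ∧ u.imI = 0 ∧ u.imJ = 1 ∧ u.imK = 0 :=
    ⟨⟨0,0,1,0⟩, rfl, rfl, rfl, rfl⟩
  have h1 := H u u 1 u0 u0
  have h2 := H u v 1 u0 v0
  clear H
  generalize b * p = y at *
  generalize p * b = x at *
  rw [Quaternion.ext_iff] at h1 h2
  simp [u0, u1, u2, u3, v0, v1, v2, v3] at h1 h2
  obtain ⟨a1, a2, a3, a4⟩ := h1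
  obtain ⟨c1, c2, c3, c4⟩ := h2
  change (0:ℝ) = _ at c1 c2 c3 c4
  constructor
  · rw [← eq_neg_iff_add_eq_zero]
    ext <;> simp <;> linarith
  · ext <;> simp <;> linarith
end

section
/- Let q ∈ ℍ be a nonzero quaternion and d ∈ ℝ, and suppose q * k * conj q = d • k. Then either d = normSq q and q lies in the real span of 1 and k (i.e. q.imI = 0 and q.imJ = 0), or d = −normSq q and q lies in the real span of i and j (i.e. q.re = 0 and q.imK = 0). (This is the paper's Lemma 'dk = qkq̄', used repeatedly in computing the automorphism groups of kinematical Lie superalgebras.) -/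
/-- The quaternion unit `k`. -/
def quatK : Quaternion ℝ := ⟨0, 0, 0, 1⟩

/-- The paper's Lemma `dk = qkq̄`: if `q k q̄ = d k` for a nonzero quaternion `q`
and a real number `d`, then either `d = |q|²` and `q ∈ span{1,k}`, or
`d = −|q|²` and `q ∈ span{i,j}`. -/
theorem stmt_4 (q : Quaternion ℝ) (hq : q ≠ 0) (d : ℝ)
    (H : q * quatK * star q = d • quatK) :
    (d = Quaternion.normSq q ∧ q.imI = 0 ∧ q.imJ = 0) ∨
    (d = -Quaternion.normSq q ∧ q.re = 0 ∧ q.imK = 0) := by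
  have h1 := congrArg (fun x : Quaternion ℝ => x.imI) H
  have h2 := congrArg (fun x : Quaternion ℝ => x.imJ) H
  have h3 := congrArg (fun x : Quaternion ℝ => x.imK) H
  have k0 : quatK.re = 0 := rfl
  have k1 : quatK.imI = 0 := rfl
  have k2 : quatK.imJ = 0 := rfl
  have k3 : quatK.imK = 1 := rfl
  simp [k0, k1, k2, k3] at h1 h2 h3
  rw [Quaternion.normSq_def']
  have hp : (q.imI ^ 2 + q.imJ ^ 2) * (q.re ^ 2 + q.imK ^ 2) = 0 := by
    have e1 : q.imI * q.imK + q.re * q.imJ = 0 := by linarith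
    have e2 : q.imJ * q.imK - q.re * q.imI = 0 := by linarith
    linear_combination (q.imI * q.imK + q.re * q.imJ) * e1
      + (q.imJ * q.imK - q.re * q.imI) * e2
  rcases mul_eq_zero.mp hp with h | h
  · left
    have hb : q.imI = 0 := by nlinarith [sq_nonneg q.imI, sq_nonneg q.imJ]
    have hc : q.imJ = 0 := by nlinarith [sq_nonneg q.imI, sq_nonneg q.imJ]
    refine ⟨?_, hb, hc⟩
    rw [hb, hc] at h3 ⊢
    linarith
  · right
    have hb : q.re = 0 := by nlinarith [sq_nonneg q.re, sq_nonneg q.imK]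
    have hc : q.imK = 0 := by nlinarith [sq_nonneg q.re, sq_nonneg q.imK]
    refine ⟨?_, hb, hc⟩
    rw [hb, hc] at h3 ⊢
    linarith
end

section
/- Let q ∈ ℍ be a nonzero quaternion and let α_q : ℍ → ℍ be the map x ↦ q * x * conj q. Then α_q maps the (j,k)-plane in the purely imaginary quaternions into itself (i.e. for every x with x.re = 0 and x.imI = 0, the quaternion q * x * conj q again satisfies (q*x*conj q).re = 0 and (q*x*conj q).imI = 0) if and only if q lies in the real span of 1 and i (q.imJ = 0 and q.imK = 0) or q lies in the real span of j and k (q.re = 0 and q.imI = 0). (This is the paper's Lemma on conjugation preserving a coordinate plane of Im ℍ.) -/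
/-- The paper's Lemma on conjugation preserving a coordinate plane of `Im ℍ`:
for a nonzero quaternion `q`, the map `x ↦ q x q̄` preserves the `(j,k)`-plane
of the purely imaginary quaternions if and only if `q ∈ span{1,i}` or
`q ∈ span{j,k}`. -/
theorem stmt_5 (q : Quaternion ℝ) (hq : q ≠ 0) :
    (∀ x : Quaternion ℝ, x.re = 0 → x.imI = 0 →
        (q * x * star q).re = 0 ∧ (q * x * star q).imI = 0) ↔
    ((q.imJ = 0 ∧ q.imK = 0) ∨ (q.re = 0 ∧ q.imI = 0)) := by
  constructor
  · intro h
    obtain ⟨x, x0, x1, x2, x3⟩ : ∃ x : Quaternion ℝ,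
        x.re = 0 ∧ x.imI = 0 ∧ x.imJ = 1 ∧ x.imK = 0 := ⟨⟨0, 0, 1, 0⟩, rfl, rfl, rfl, rfl⟩
    obtain ⟨y, y0, y1, y2, y3⟩ : ∃ x : Quaternion ℝ,
        x.re = 0 ∧ x.imI = 0 ∧ x.imJ = 0 ∧ x.imK = 1 := ⟨⟨0, 0, 0, 1⟩, rfl, rfl, rfl, rfl⟩
    have h1 := (h x x0 x1).2
    have h2 := (h y y0 y1).2
    simp only [Quaternion.imI_mul, Quaternion.re_mul, Quaternion.imJ_mul, Quaternion.imK_mul,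
      Quaternion.re_star, Quaternion.imI_star, Quaternion.imJ_star, Quaternion.imK_star,
      x0, x1, x2, x3, y0, y1, y2, y3] at h1 h2
    have e1 : q.imI * q.imJ - q.re * q.imK = 0 := by linarith
    have e2 : q.imI * q.imK + q.re * q.imJ = 0 := by linarith
    have e3 : (q.re ^ 2 + q.imI ^ 2) * (q.imJ ^ 2 + q.imK ^ 2) = 0 := by
      linear_combination (q.imI * q.imJ - q.re * q.imK) * e1
        + (q.imI * q.imK + q.re * q.imJ) * e2
    rcases mul_eq_zero.mp e3 with h | h
    · right
      constructor <;> nlinarith [sq_nonneg q.re, sq_nonneg q.imI]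
    · left
      constructor <;> nlinarith [sq_nonneg q.imJ, sq_nonneg q.imK]
  · intro h x hx0 hx1
    simp only [Quaternion.imI_mul, Quaternion.re_mul, Quaternion.imJ_mul, Quaternion.imK_mul,
      Quaternion.re_star, Quaternion.imI_star, Quaternion.imJ_star, Quaternion.imK_star, hx0, hx1]
    rcases h with ⟨h, h'⟩ | ⟨h, h'⟩ <;> rw [h, h'] <;> constructor <;> ring
end

section
/- Let b, p ∈ ℍ satisfy b * b = ((−1/4 : ℝ) : ℍ), p * p = ((−1/4 : ℝ) : ℍ) and b * p + p * b = 0, and set h := b * p − p * b. Then b, p and h are purely imaginary, h = 2 • (b * p), h * h = ((−1/4 : ℝ) : ℍ), h * b + b * h = 0, h * p + p * h = 0, h * b − b * h = p, and p * h − h * p = b. (This is the paper's assertion, in the classification of the anti-de Sitter superalgebra osp(1|4), that the relations p = [h,b], b = [p,h], h = [b,p], b² = p² = −¼ and b ⟂ p force (2b, 2p, 2h) to be an oriented orthonormal basis of the imaginary quaternions.) -/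
/-- A quaternion with square `-1/4` is purely imaginary. -/
theorem re_zero_of_sq (q : Quaternion ℝ) (hq : q * q = ((-1/4 : ℝ) : Quaternion ℝ)) :
    q.re = 0 := by
  have h0 := congrArg (fun x : Quaternion ℝ => x.re) hq
  have h1 := congrArg (fun x : Quaternion ℝ => x.imI) hq
  have h2 := congrArg (fun x : Quaternion ℝ => x.imJ) hq
  have h3 := congrArg (fun x : Quaternion ℝ => x.imK) hq
  simp only [Quaternion.re_mul, Quaternion.imI_mul, Quaternion.imJ_mul, Quaternion.imK_mul,
    Quaternion.re_coe, Quaternion.imI_coe, Quaternion.imJ_coe, Quaternion.imK_coe] at h0 h1 h2 h3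
  by_contra hne
  have e1 : q.imI = 0 := mul_left_cancel₀ hne (by linarith)
  have e2 : q.imJ = 0 := mul_left_cancel₀ hne (by linarith)
  have e3 : q.imK = 0 := mul_left_cancel₀ hne (by linarith)
  rw [e1, e2, e3] at h0
  nlinarith [mul_self_nonneg q.re]


/-- In the classification of the AdS superalgebra `osp(1|4)`: if `b² = p² = −¼`
and `bp + pb = 0`, then setting `h := [b,p]` the quaternions `b, p, h` are purely
imaginary, `h = 2bp`, `h² = −¼`, `h` anticommutes with `b` and `p`, `[h,b] = p`
and `[p,h] = b`; that is, `(2b, 2p, 2h)` is an oriented orthonormal basis of `Im ℍ`. -/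
theorem stmt_10 (b p h : Quaternion ℝ)
    (hb : b * b = ((-1/4 : ℝ) : Quaternion ℝ))
    (hp : p * p = ((-1/4 : ℝ) : Quaternion ℝ))
    (hbp : b * p + p * b = 0)
    (hh : h = b * p - p * b) :
    b.re = 0 ∧ p.re = 0 ∧ h.re = 0 ∧
    h = (2 : ℝ) • (b * p) ∧ h * h = ((-1/4 : ℝ) : Quaternion ℝ) ∧
    h * b + b * h = 0 ∧ h * p + p * h = 0 ∧
    h * b - b * h = p ∧ p * h - h * p = b := by
  have hpb : p * b = -(b * p) := eq_neg_of_add_eq_zero_right hbp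
  have hb' : b * b = (-1/4 : ℝ) • (1 : Quaternion ℝ) := by
    rw [hb, ← Algebra.algebraMap_eq_smul_one]; rfl
  have hp' : p * p = (-1/4 : ℝ) • (1 : Quaternion ℝ) := by
    rw [hp, ← Algebra.algebraMap_eq_smul_one]; rfl
  have h2 : h = (2 : ℝ) • (b * p) := by
    rw [hh, hpb, sub_neg_eq_add, two_smul]
  have e1 : h * b = (1/2 : ℝ) • p := by
    rw [h2, smul_mul_assoc, mul_assoc, hpb, mul_neg, ← mul_assoc, hb', smul_mul_assoc, one_mul]
    module
  have e2 : b * h = (-1/2 : ℝ) • p := by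
    rw [h2, mul_smul_comm, ← mul_assoc, hb', smul_mul_assoc, one_mul]
    module
  have e3 : h * p = (-1/2 : ℝ) • b := by
    rw [h2, smul_mul_assoc, mul_assoc, hp', mul_smul_comm, mul_one]
    module
  have e4 : p * h = (1/2 : ℝ) • b := by
    rw [h2, mul_smul_comm, ← mul_assoc, hpb, neg_mul, mul_assoc, hp', mul_smul_comm, mul_one]
    module
  have e5 : h * h = ((-1/4 : ℝ) : Quaternion ℝ) := by
    rw [← hp]
    nth_rewrite 2 [h2]
    rw [mul_smul_comm, ← mul_assoc, e1, smul_mul_assoc, smul_smul]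
    norm_num
  refine ⟨re_zero_of_sq b hb, re_zero_of_sq p hp, re_zero_of_sq h e5, h2, e5, ?_, ?_, ?_, ?_⟩
  · rw [e1, e2]; module
  · rw [e3, e4]; module
  · rw [e1, e2]; module
  · rw [e3, e4]; module
end

section
/- Let h ∈ ℍ and let c₂, c₃ ∈ ℍ be purely imaginary quaternions, not both zero. Suppose h * c₂ + c₂ * conj h = 0 and c₂ + h * c₃ + c₃ * conj h = 0. Then h is purely imaginary, c₂ = 0, c₃ ≠ 0, and there exists ψ ∈ ℝ with h = ψ • c₃. (This is the paper's solution of the [H,Q,Q] Jacobi equations in the classification of galilean kinematical Lie superalgebras: the two galilean superalgebras have h = ψ c₃ with c₂ = 0.) -/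
lemma aux_zero {x y z : ℝ} (h : x^2+y^2+z^2 = 0) : x = 0 ∧ y = 0 ∧ z = 0 := by
  refine ⟨?_, ?_, ?_⟩ <;> nlinarith [sq_nonneg x, sq_nonneg y, sq_nonneg z]

/-- The paper's solution of the `[H,Q,Q]` Jacobi equations for the galilean
kinematical Lie superalgebras: if `c₂, c₃ ∈ Im ℍ` are not both zero and
`h c₂ + c₂ h̄ = 0` and `c₂ + h c₃ + c₃ h̄ = 0`, then `h` is purely imaginary,
`c₂ = 0`, `c₃ ≠ 0` and `h = ψ c₃` for some real `ψ`. -/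
theorem stmt_11 (h c₂ c₃ : Quaternion ℝ) (hc₂ : c₂.re = 0) (hc₃ : c₃.re = 0)
    (hne : ¬(c₂ = 0 ∧ c₃ = 0))
    (e₁ : h * c₂ + c₂ * star h = 0)
    (e₂ : c₂ + h * c₃ + c₃ * star h = 0) :
    h.re = 0 ∧ c₂ = 0 ∧ c₃ ≠ 0 ∧ ∃ ψ : ℝ, h = ψ • c₃ := by
  simp only [Quaternion.ext_iff, Quaternion.re_add, Quaternion.imI_add, Quaternion.imJ_add,
    Quaternion.imK_add, Quaternion.re_mul, Quaternion.imI_mul, Quaternion.imJ_mul,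
    Quaternion.imK_mul, Quaternion.re_star, Quaternion.imI_star, Quaternion.imJ_star,
    Quaternion.imK_star, Quaternion.re_zero, Quaternion.imI_zero, Quaternion.imJ_zero,
    Quaternion.imK_zero, Quaternion.re_smul, Quaternion.imI_smul, Quaternion.imJ_smul,
    Quaternion.imK_smul, smul_eq_mul, ne_eq] at *
  generalize h.re = a, h.imI = x, h.imJ = y, h.imK = z at *
  generalize c₂.re = p, c₂.imI = b, c₂.imJ = c, c₂.imK = d at *
  generalize c₃.re = q, c₃.imI = e, c₃.imJ = f, c₃.imK = g at *
  subst hc₂ hc₃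
  obtain ⟨-, u1, u2, u3⟩ := e₁
  obtain ⟨-, v1, v2, v3⟩ := e₂
  have hb : b = 0 ∧ c = 0 ∧ d = 0 := by
    by_contra hn
    have hN : b^2+c^2+d^2 ≠ 0 := fun h0 => hn (aux_zero h0)
    have ha : a = 0 := by
      have : a * (b^2+c^2+d^2) = 0 := by linear_combination (b*u1+c*u2+d*u3)/2
      exact (mul_eq_zero.mp this).resolve_right hN
    subst ha
    have hd : x*b+y*c+z*d = 0 := by linear_combination x*v1+y*v2+z*v3
    have hv : (x^2+y^2+z^2) * (b^2+c^2+d^2) = 0 := by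
      linear_combination (x*b+y*c+z*d)*hd + (y*d-z*c)/2*u1 + (z*b-x*d)/2*u2 + (x*c-y*b)/2*u3
    obtain ⟨rfl, rfl, rfl⟩ := aux_zero ((mul_eq_zero.mp hv).resolve_right hN)
    exact hn ⟨by linarith, by linarith, by linarith⟩
  obtain ⟨rfl, rfl, rfl⟩ := hb
  have hn : ¬ (e = 0 ∧ f = 0 ∧ g = 0) := fun h0 => hne (by simp [h0])
  have hN : e^2+f^2+g^2 ≠ 0 := fun h0 => hn (aux_zero h0)
  have ha : a = 0 := by
    have : a * (e^2+f^2+g^2) = 0 := by linear_combination (e*v1+f*v2+g*v3)/2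
    exact (mul_eq_zero.mp this).resolve_right hN
  subst ha
  refine ⟨rfl, by simp, fun h0 => hn h0.2, (x*e+y*f+z*g)/(e^2+f^2+g^2), by simp, ?_, ?_, ?_⟩
  · field_simp
    linear_combination (f*v3-g*v2)*(1/2)
  · field_simp
    linear_combination (g*v1-e*v3)*(1/2)
  · field_simp
    linear_combination (e*v2-f*v1)*(1/2)
end

section
/- Let χ ∈ ℝ, let h ∈ ℍ, and let c₂, c₃ ∈ ℍ be purely imaginary quaternions, not both zero. Suppose χ • c₂ − c₃ = h * c₂ + c₂ * conj h and χ • c₃ + c₂ = h * c₃ + c₃ * conj h. Then: h.re = χ/2; c₂ ≠ 0 and c₃ ≠ 0; and, setting a := h − ((χ/2 : ℝ) : ℍ), one has a * c₂ − c₂ * a = −c₃, a * c₃ − c₃ * a = c₂, normSq a = 1/4, normSq c₂ = normSq c₃, and the quaternions a, c₂, c₃ are pairwise orthogonal in the sense that (c₂ * conj c₃).re = 0, (a * conj c₂).re = 0 and (a * conj c₃).re = 0. (This is the paper's solution of the [H,Q,Q] Jacobi equations for the kinematical Lie algebras K4_χ, showing that (Im h, c₃, c₂) is an orthogonal triple with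 |Im h| = ½.) -/
/-- Coordinate version: `w = x,y,z` of `a`, `p` of `c₂`, `q` of `c₃`, `t = χ - 2 Re h`. -/
theorem aux_coord (t x y z p1 p2 p3 q1 q2 q3 : ℝ)
    (hne : ¬ (p1 ^ 2 + p2 ^ 2 + p3 ^ 2 + (q1 ^ 2 + q2 ^ 2 + q3 ^ 2) = 0))
    (a1 : t * p1 - q1 = 2 * (y * p3 - z * p2))
    (a2 : t * p2 - q2 = 2 * (z * p1 - x * p3))
    (a3 : t * p3 - q3 = 2 * (x * p2 - y * p1))
    (b1 : t * q1 + p1 = 2 * (y * q3 - z * q2))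
    (b2 : t * q2 + p2 = 2 * (z * q1 - x * q3))
    (b3 : t * q3 + p3 = 2 * (x * q2 - y * q1)) :
    t = 0 ∧ x * p1 + y * p2 + z * p3 = 0 ∧ x * q1 + y * q2 + z * q3 = 0 ∧
    p1 * q1 + p2 * q2 + p3 * q3 = 0 ∧
    p1 ^ 2 + p2 ^ 2 + p3 ^ 2 = q1 ^ 2 + q2 ^ 2 + q3 ^ 2 ∧
    x ^ 2 + y ^ 2 + z ^ 2 = 1 / 4 := by
  have ht : t = 0 := by
    have : t * (p1 ^ 2 + p2 ^ 2 + p3 ^ 2 + (q1 ^ 2 + q2 ^ 2 + q3 ^ 2)) = 0 := by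
      linear_combination p1 * a1 + p2 * a2 + p3 * a3 + q1 * b1 + q2 * b2 + q3 * b3
    exact (mul_eq_zero.mp this).resolve_right hne
  subst ht
  have hp : x * p1 + y * p2 + z * p3 = 0 := by
    linear_combination x * b1 + y * b2 + z * b3
  have hq : x * q1 + y * q2 + z * q3 = 0 := by
    linear_combination -(x * a1 + y * a2 + z * a3)
  have hpq : p1 * q1 + p2 * q2 + p3 * q3 = 0 := by
    linear_combination -(p1 * a1 + p2 * a2 + p3 * a3)
  have hn : p1 ^ 2 + p2 ^ 2 + p3 ^ 2 = q1 ^ 2 + q2 ^ 2 + q3 ^ 2 := by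
    linear_combination p1 * b1 + p2 * b2 + p3 * b3 + q1 * a1 + q2 * a2 + q3 * a3
  refine ⟨rfl, hp, hq, hpq, hn, ?_⟩
  have hpne : p1 ^ 2 + p2 ^ 2 + p3 ^ 2 ≠ 0 := by
    intro h0
    exact hne (by linarith)
  have k1 : p1 * (1 - 4 * (x ^ 2 + y ^ 2 + z ^ 2)) = 0 := by
    linear_combination b1 - 2 * (y * a3 - z * a2) - 4 * x * hp
  have k2 : p2 * (1 - 4 * (x ^ 2 + y ^ 2 + z ^ 2)) = 0 := by
    linear_combination b2 - 2 * (z * a1 - x * a3) - 4 * y * hp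
  have k3 : p3 * (1 - 4 * (x ^ 2 + y ^ 2 + z ^ 2)) = 0 := by
    linear_combination b3 - 2 * (x * a2 - y * a1) - 4 * z * hp
  have : (p1 ^ 2 + p2 ^ 2 + p3 ^ 2) * (1 - 4 * (x ^ 2 + y ^ 2 + z ^ 2)) = 0 := by
    linear_combination p1 * k1 + p2 * k2 + p3 * k3
  have := (mul_eq_zero.mp this).resolve_left hpne
  linarith


/-- The paper's solution of the `[H,Q,Q]` Jacobi equations for the kinematical Lie
algebras `K4_χ`: if `c₂, c₃ ∈ Im ℍ` are not both zero and
`χ c₂ − c₃ = h c₂ + c₂ h̄` and `χ c₃ + c₂ = h c₃ + c₃ h̄`, then `Re h = χ/2`,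
both `c₂` and `c₃` are nonzero, and with `a := Im h = h − χ/2` one has
`[a,c₂] = −c₃`, `[a,c₃] = c₂`, `|a|² = ¼`, `|c₂| = |c₃|`, and `a, c₂, c₃` are
pairwise orthogonal. -/
theorem stmt_12 (χ : ℝ) (h c₂ c₃ : Quaternion ℝ) (hc₂ : c₂.re = 0) (hc₃ : c₃.re = 0)
    (hne : ¬(c₂ = 0 ∧ c₃ = 0))
    (e₁ : χ • c₂ - c₃ = h * c₂ + c₂ * star h)
    (e₂ : χ • c₃ + c₂ = h * c₃ + c₃ * star h) :
    h.re = χ/2 ∧ c₂ ≠ 0 ∧ c₃ ≠ 0 ∧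
    (h - ((χ/2 : ℝ) : Quaternion ℝ)) * c₂ - c₂ * (h - ((χ/2 : ℝ) : Quaternion ℝ)) = -c₃ ∧
    (h - ((χ/2 : ℝ) : Quaternion ℝ)) * c₃ - c₃ * (h - ((χ/2 : ℝ) : Quaternion ℝ)) = c₂ ∧
    Quaternion.normSq (h - ((χ/2 : ℝ) : Quaternion ℝ)) = 1/4 ∧
    Quaternion.normSq c₂ = Quaternion.normSq c₃ ∧
    (c₂ * star c₃).re = 0 ∧
    ((h - ((χ/2 : ℝ) : Quaternion ℝ)) * star c₂).re = 0 ∧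
    ((h - ((χ/2 : ℝ) : Quaternion ℝ)) * star c₃).re = 0 := by
  have hne' : ¬ (c₂.imI ^ 2 + c₂.imJ ^ 2 + c₂.imK ^ 2
      + (c₃.imI ^ 2 + c₃.imJ ^ 2 + c₃.imK ^ 2) = 0) := by
    intro h0
    apply hne
    have g1 : c₂.imI = 0 := by nlinarith
    have g2 : c₂.imJ = 0 := by nlinarith
    have g3 : c₂.imK = 0 := by nlinarith
    have g4 : c₃.imI = 0 := by nlinarith
    have g5 : c₃.imJ = 0 := by nlinarith
    have g6 : c₃.imK = 0 := by nlinarith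
    constructor <;> ext <;> assumption
  have a1 := congrArg QuaternionAlgebra.imI e₁
  have a2 := congrArg QuaternionAlgebra.imJ e₁
  have a3 := congrArg QuaternionAlgebra.imK e₁
  have b1 := congrArg QuaternionAlgebra.imI e₂
  have b2 := congrArg QuaternionAlgebra.imJ e₂
  have b3 := congrArg QuaternionAlgebra.imK e₂
  simp [hc₂, hc₃] at a1 a2 a3 b1 b2 b3
  obtain ⟨ht, hp, hq, hpq, hn, ha⟩ := aux_coord (χ - 2 * h.re) h.imI h.imJ h.imK
    c₂.imI c₂.imJ c₂.imK c₃.imI c₃.imJ c₃.imK hne'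
    (by linarith) (by linarith) (by linarith) (by linarith) (by linarith) (by linarith)
  have hr : χ = 2 * h.re := by linarith
  subst hr
  refine ⟨by simp, ?_, ?_, ?_, ?_, ?_, ?_, ?_, ?_, ?_⟩
  · intro h0
    apply hne'
    rw [← hn]
    have z1 : (0 : Quaternion ℝ).imI = 0 := rfl
    have z2 : (0 : Quaternion ℝ).imJ = 0 := rfl
    have z3 : (0 : Quaternion ℝ).imK = 0 := rfl
    rw [h0, z1, z2, z3]
    simp
  · intro h0
    apply hne'
    rw [hn]
    have z1 : (0 : Quaternion ℝ).imI = 0 := rfl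
    have z2 : (0 : Quaternion ℝ).imJ = 0 := rfl
    have z3 : (0 : Quaternion ℝ).imK = 0 := rfl
    rw [h0, z1, z2, z3]
    simp
  · ext <;> simp [hc₂, hc₃] <;> linarith
  · ext <;> simp [hc₂, hc₃] <;> linarith
  · simp [Quaternion.normSq_def']
    linarith
  · simp [Quaternion.normSq_def', hc₂, hc₃]
    linarith
  · simp [hc₂, hc₃]
    linarith
  · simp [hc₂]
    linarith
  · simp [hc₃]
    linarith
end

section
/- Let B : ℍ → ℍ → ℍ be ℝ-bilinear and suppose that for all purely imaginary quaternions ω, β and every s ∈ ℍ one has ω * B(β, s) = B(ω*β − β*ω, s) + B(β, ω*s). Then there exists a unique b ∈ ℍ such that B(β, s) = β * s * b for every purely imaginary β and every s ∈ ℍ. (This is the paper's claim that the space of r-equivariant maps V ⊗ S → S, where V = Im ℍ is the vector representation and S = ℍ the spinor representation of sp(1), is a copy of ℍ realised by (β, s) ↦ β s b; it justifies the general form [B(β),Q(s)] = Q(β s b) and [P(π),Q(s)] = Q(π s p) of the brackets.) -/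
set_option linter.unusedSimpArgs false

/-- The space of `r`-equivariant maps `V ⊗ S → S`, with `V = Im ℍ` the vector module
and `S = ℍ` the spinor module of `sp(1)`, is a copy of `ℍ`: every ℝ-bilinear map
`B : ℍ × ℍ → ℍ` satisfying the infinitesimal equivariance condition
`ω B(β,s) = B([ω,β],s) + B(β,ωs)` for all imaginary `ω, β` is of the form
`B(β,s) = β s b` on imaginary `β`, for a unique `b ∈ ℍ`. -/
theorem stmt_16 (B : Quaternion ℝ →ₗ[ℝ] Quaternion ℝ →ₗ[ℝ] Quaternion ℝ)
    (H : ∀ ω β s : Quaternion ℝ, ω.re = 0 → β.re = 0 →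
      ω * B β s = B (ω * β - β * ω) s + B β (ω * s)) :
    ∃! b : Quaternion ℝ, ∀ β s : Quaternion ℝ, β.re = 0 → B β s = β * s * b := by
  have H1 : ∀ ω β : Quaternion ℝ, ω.re = 0 → β.re = 0 →
      B β ω = ω * B β 1 - B (ω * β - β * ω) 1 := by
    intro ω β hω hβ
    have h := H ω β 1 hω hβ
    rw [mul_one] at h
    rw [h]; abel
  have H2 : ∀ β s : Quaternion ℝ, β.re = 0 → β * B β s = B β (β * s) := by
    intro β s hβ
    have h := H β β s hβ hβ
    simpa using h
  obtain ⟨i, i0, i1, i2, i3⟩ : ∃ i : Quaternion ℝ, i.re = 0 ∧ i.imI = 1 ∧ i.imJ = 0 ∧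
      i.imK = 0 := ⟨⟨0, 1, 0, 0⟩, rfl, rfl, rfl, rfl⟩
  obtain ⟨j, j0, j1, j2, j3⟩ : ∃ j : Quaternion ℝ, j.re = 0 ∧ j.imI = 0 ∧ j.imJ = 1 ∧
      j.imK = 0 := ⟨⟨0, 0, 1, 0⟩, rfl, rfl, rfl, rfl⟩
  obtain ⟨k, k0, k1, k2, k3⟩ : ∃ k : Quaternion ℝ, k.re = 0 ∧ k.imI = 0 ∧ k.imJ = 0 ∧
      k.imK = 1 := ⟨⟨0, 0, 0, 1⟩, rfl, rfl, rfl, rfl⟩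
  have hii : i * i = -1 := by apply Quaternion.ext <;> simp [Quaternion.re_one, Quaternion.imI_one, Quaternion.imJ_one, Quaternion.imK_one, i0, i1, i2, i3, j0, j1, j2, j3, k0, k1, k2, k3]
  have hkk : k * k = -1 := by apply Quaternion.ext <;> simp [Quaternion.re_one, Quaternion.imI_one, Quaternion.imJ_one, Quaternion.imK_one, i0, i1, i2, i3, j0, j1, j2, j3, k0, k1, k2, k3]
  have hij : i * j = k := by apply Quaternion.ext <;> simp [Quaternion.re_one, Quaternion.imI_one, Quaternion.imJ_one, Quaternion.imK_one, i0, i1, i2, i3, j0, j1, j2, j3, k0, k1, k2, k3]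
  have hji : j * i = -k := by apply Quaternion.ext <;> simp [Quaternion.re_one, Quaternion.imI_one, Quaternion.imJ_one, Quaternion.imK_one, i0, i1, i2, i3, j0, j1, j2, j3, k0, k1, k2, k3]
  have hki : k * i = j := by apply Quaternion.ext <;> simp [Quaternion.re_one, Quaternion.imI_one, Quaternion.imJ_one, Quaternion.imK_one, i0, i1, i2, i3, j0, j1, j2, j3, k0, k1, k2, k3]
  have hik : i * k = -j := by apply Quaternion.ext <;> simp [Quaternion.re_one, Quaternion.imI_one, Quaternion.imJ_one, Quaternion.imK_one, i0, i1, i2, i3, j0, j1, j2, j3, k0, k1, k2, k3]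
  have hjk : j * k = i := by apply Quaternion.ext <;> simp [Quaternion.re_one, Quaternion.imI_one, Quaternion.imJ_one, Quaternion.imK_one, i0, i1, i2, i3, j0, j1, j2, j3, k0, k1, k2, k3]
  have hkj : k * j = -i := by apply Quaternion.ext <;> simp [Quaternion.re_one, Quaternion.imI_one, Quaternion.imJ_one, Quaternion.imK_one, i0, i1, i2, i3, j0, j1, j2, j3, k0, k1, k2, k3]
  -- the key relations
  have e1 : B j 1 = -(i * B k 1) := by
    have a := H2 i j i0
    rw [hij, H1 j i j0 i0, H1 k i k0 i0, hij, hji, hki, hik, mul_sub, ← mul_assoc, hij] at a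
    simp only [map_sub, map_neg, LinearMap.sub_apply, LinearMap.neg_apply, mul_sub, mul_neg] at a
    have a' : (2 : ℝ) • (B j 1) = (2 : ℝ) • (-(i * B k 1)) := by
      rw [two_smul, two_smul, ← sub_eq_zero]
      rw [← sub_eq_zero] at a
      rw [← a]; abel_nf
      try simp
    exact smul_right_injective _ (two_ne_zero) a'
  have e2 : B i 1 = -(k * B j 1) := by
    have a := H2 k i k0
    rw [hki, H1 i k i0 k0, H1 j k j0 k0, hik, hki, hjk, hkj, mul_sub, ← mul_assoc, hki] at a
    simp only [map_sub, map_neg, LinearMap.sub_apply, LinearMap.neg_apply, mul_sub, mul_neg] at a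
    have a' : (2 : ℝ) • (B i 1) = (2 : ℝ) • (-(k * B j 1)) := by
      rw [two_smul, two_smul, ← sub_eq_zero]
      rw [← sub_eq_zero] at a
      rw [← a]; abel_nf
      try simp
    exact smul_right_injective _ (two_ne_zero) a'
  obtain ⟨b, hb⟩ : ∃ b, b = -(i * B i 1) := ⟨_, rfl⟩
  have xi : B i 1 = i * b := by
    rw [hb, mul_neg, ← mul_assoc, hii]; simp
  have xj : B j 1 = j * b := by
    have : k * B i 1 = B j 1 := by
      rw [e2, mul_neg, ← mul_assoc, hkk]; simp
    rw [← this, xi, ← mul_assoc, hki]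
  have xk : B k 1 = k * b := by
    have : i * B j 1 = B k 1 := by
      rw [e1, mul_neg, ← mul_assoc, hii]; simp
    rw [← this, xj, ← mul_assoc, hij]
  have X : ∀ β : Quaternion ℝ, β.re = 0 → B β 1 = β * b := by
    intro β hβ
    have h : β = β.imI • i + β.imJ • j + β.imK • k := by
      apply Quaternion.ext <;> simp [Quaternion.re_one, Quaternion.imI_one, Quaternion.imJ_one, Quaternion.imK_one, hβ, i0, i1, i2, i3, j0, j1, j2, j3, k0, k1, k2, k3]
    rw [h]
    simp only [map_add, map_smul, LinearMap.add_apply, LinearMap.smul_apply, xi, xj, xk,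
      add_mul, smul_mul_assoc]
  refine ⟨b, ?_, ?_⟩
  · intro β s hβ
    have hs : s = s.re • (1 : Quaternion ℝ) + s.im := by
      apply Quaternion.ext <;> simp [Quaternion.re_one, Quaternion.imI_one, Quaternion.imJ_one, Quaternion.imK_one]
    have hc : (s.im * β - β * s.im).re = 0 := by
      simp; ring
    have h1 : B β s.im = β * s.im * b := by
      rw [H1 s.im β (by simp) hβ, X β hβ, X _ hc]
      noncomm_ring
    rw [hs, map_add, map_smul, X β hβ, h1, mul_add, add_mul]
    simp
  · intro c hc
    have h := hc i 1 i0
    rw [hb, h, mul_one, ← mul_assoc, hii]; simp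
end

section
/- Let α, β ∈ ℝ with α² + β² = 1. Define real 2×2 matrices σ₁ = !![0,1;1,0], σ₃ = !![1,0;0,−1], ε = !![0,1;−1,0] and 𝟙₂ the identity, and define the real 4×4 matrices (as Kronecker products) γ⁰ = ε ⊗ₖ (α•σ₁ − β•σ₃), γ¹ = σ₃ ⊗ₖ (α•σ₁ − β•σ₃), γ² = −(𝟙₂ ⊗ₖ (α•σ₃ + β•σ₁)), γ³ = σ₁ ⊗ₖ (α•σ₁ − β•σ₃). Let η be the Minkowski form with η⁰⁰ = 1, η¹¹ = η²² = η³³ = −1 and η^{μν} = 0 for μ ≠ ν. Then these matrices represent the Clifford algebra Cl(1,3): for all μ, ν ∈ {0,1,2,3}, γ^μ * γ^ν + γ^ν * γ^μ = (−2 * η^{μν}) • 𝟙, where 𝟙 is the 4×4 identity matrix. (This is the Clifford-algebra relation the paper verifies when unpacking the quaternionic form of the Poincaré superalgebra into γ-matrix language.) -/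
open Matrix Kronecker

/-- Pauli matrix σ₁. -/
def pauli1 : Matrix (Fin 2) (Fin 2) ℝ := !![0, 1; 1, 0]

/-- Pauli matrix σ₃. -/
def pauli3 : Matrix (Fin 2) (Fin 2) ℝ := !![1, 0; 0, -1]

/-- The 2×2 symplectic matrix ε = iσ₂. -/
def eps2 : Matrix (Fin 2) (Fin 2) ℝ := !![0, 1; -1, 0]

/-- The γ-matrices of the paper (for the symplectic structure parametrised by
`(α,β)` on the circle `α² + β² = 1`), as Kronecker products. -/
def gammaMat (α β : ℝ) : Fin 4 → Matrix (Fin 2 × Fin 2) (Fin 2 × Fin 2) ℝ :=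
  ![eps2 ⊗ₖ (α • pauli1 - β • pauli3),
    pauli3 ⊗ₖ (α • pauli1 - β • pauli3),
    -((1 : Matrix (Fin 2) (Fin 2) ℝ) ⊗ₖ (α • pauli3 + β • pauli1)),
    pauli1 ⊗ₖ (α • pauli1 - β • pauli3)]

/-- The Minkowski form η = diag(1,−1,−1,−1). -/
def etaMink : Matrix (Fin 4) (Fin 4) ℝ :=
  !![1, 0, 0, 0; 0, -1, 0, 0; 0, 0, -1, 0; 0, 0, 0, -1]

/-- The matrices `γ^μ` represent the Clifford algebra `Cl(1,3)`:
`γ^μ γ^ν + γ^ν γ^μ = −2 η^{μν} 𝟙`. -/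
theorem stmt_17 (α β : ℝ) (hαβ : α ^ 2 + β ^ 2 = 1) (μ ν : Fin 4) :
    gammaMat α β μ * gammaMat α β ν + gammaMat α β ν * gammaMat α β μ
      = (-2 * etaMink μ ν) • (1 : Matrix (Fin 2 × Fin 2) (Fin 2 × Fin 2) ℝ) := by
  have hA : (α • pauli1 - β • pauli3) * (α • pauli1 - β • pauli3) = 1 := by
    ext i j
    fin_cases i <;> fin_cases j <;> simp [pauli1, pauli3, Matrix.mul_apply] <;>
      first | ring1 | linear_combination hαβ
  have hB : (α • pauli3 + β • pauli1) * (α • pauli3 + β • pauli1) = 1 := by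
    ext i j
    fin_cases i <;> fin_cases j <;> simp [pauli1, pauli3, Matrix.mul_apply] <;>
      first | ring1 | linear_combination hαβ
  have hBA : (α • pauli3 + β • pauli1) * (α • pauli1 - β • pauli3)
      = (-1 : ℝ) • ((α • pauli1 - β • pauli3) * (α • pauli3 + β • pauli1)) := by
    ext i j
    fin_cases i <;> fin_cases j <;> simp [pauli1, pauli3, Matrix.mul_apply] <;> ring1
  have h11 : pauli1 * pauli1 = 1 := by
    ext i j
    fin_cases i <;> fin_cases j <;> simp [pauli1]
  have h33 : pauli3 * pauli3 = 1 := by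
    ext i j
    fin_cases i <;> fin_cases j <;> simp [pauli3]
  have hee : eps2 * eps2 = (-1 : ℝ) • (1 : Matrix (Fin 2) (Fin 2) ℝ) := by
    ext i j
    fin_cases i <;> fin_cases j <;> simp [eps2]
  have h31 : pauli3 * pauli1 = (-1 : ℝ) • (pauli1 * pauli3) := by
    ext i j
    fin_cases i <;> fin_cases j <;> simp [pauli1, pauli3]
  have he1 : eps2 * pauli1 = (-1 : ℝ) • (pauli1 * eps2) := by
    ext i j
    fin_cases i <;> fin_cases j <;> simp [pauli1, eps2]
  have he3 : eps2 * pauli3 = (-1 : ℝ) • (pauli3 * eps2) := by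
    ext i j
    fin_cases i <;> fin_cases j <;> simp [pauli3, eps2]
  unfold gammaMat
  generalize α • pauli1 - β • pauli3 = A at *
  generalize α • pauli3 + β • pauli1 = B at *
  fin_cases μ <;> fin_cases ν <;>
    simp only [etaMink, Fin.zero_eta, Fin.mk_one, Fin.reduceFinMk, Matrix.cons_val,
      Matrix.of_apply, Matrix.neg_mul, Matrix.mul_neg, neg_neg, ← Matrix.mul_kronecker_mul,
      hA, hB, hBA, h11, h33, hee, h31, he1, he3, Matrix.smul_kronecker, Matrix.kronecker_smul,
      Matrix.one_kronecker_one, Matrix.one_mul, Matrix.mul_one] <;>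
    module
end

section
/- Let q ∈ ℍ satisfy q.re = 0 and q * k + k * q = 0 (equivalently, q lies in the real span of i and j). Then the bilinear form ω_q(s₁,s₂) = (s₁ * q * conj s₂).re on ℍ is invariant under the infinitesimal rotations and boosts of the Poincaré superalgebra acting on spinors: for every purely imaginary ω and all s₁, s₂ ∈ ℍ, ((ω*s₁) * q * conj s₂).re + (s₁ * q * conj (ω*s₂)).re = 0, and for every purely imaginary β and all s₁, s₂ ∈ ℍ, ((β*s₁*k) * q * conj s₂).re + (s₁ * q * conj (β*s₂*k)).re = 0. (This is the paper's claim that there is a two-parameter family ω(s₁,s₂) = Re(s₁(αi+βj)s̄₂) of symplectic forms on the spinor representation invariant under the Lorentz action J_i, B_i of Minkowski superspace.) -/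
/-- For `q` purely imaginary and anticommuting with `k` (i.e. `q ∈ span{i,j}`),
the bilinear form `ω_q(s₁,s₂) = Re(s₁ q s̄₂)` on the spinor module `ℍ` is invariant
under the infinitesimal rotations `s ↦ ωs` and boosts `s ↦ βsk` of the Poincaré
superalgebra. -/
theorem stmt_18 (q : Quaternion ℝ) (hre : q.re = 0) (hk : q * quatK + quatK * q = 0) :
    (∀ ω s₁ s₂ : Quaternion ℝ, ω.re = 0 →
      ((ω * s₁) * q * star s₂).re + (s₁ * q * star (ω * s₂)).re = 0) ∧
    (∀ β s₁ s₂ : Quaternion ℝ, β.re = 0 →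
      ((β * s₁ * quatK) * q * star s₂).re + (s₁ * q * star (β * s₂ * quatK)).re = 0) := by
  have k0 : quatK.re = 0 := rfl
  have k1 : quatK.imI = 0 := rfl
  have k2 : quatK.imJ = 0 := rfl
  have k3 : quatK.imK = 1 := rfl
  have h3 : q.imK = 0 := by
    have h : (q * quatK + quatK * q).re = (0 : Quaternion ℝ).re := by rw [hk]
    simp only [Quaternion.re_add, Quaternion.re_mul, Quaternion.re_zero, k0, k1, k2, k3] at h
    linarith
  constructor
  · intro ω s₁ s₂ hω
    simp [hre, h3, hω]
    ring
  · intro β s₁ s₂ hβ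
    simp [k0, k1, k2, k3, hre, h3, hβ]
    ring
end

section
/- Let a, b, μ ∈ ℝ and let q ∈ ℍ be nonzero. Suppose μ • (q * k) = k * q, μ = normSq q, a • (q * i) − b • (q * j) = i * q, and b • (q * i) + a • (q * j) = j * q. Then μ = 1 and there exists θ ∈ ℝ such that q = ((Real.cos θ : ℝ) : ℍ) + (Real.sin θ) • k, a = Real.cos (2θ) and b = Real.sin (2θ). (This is the paper's computation of the r-fixing automorphisms of the AdS superalgebra osp(1|4): they form a circle, given by A the rotation by 2θ in the (B,P)-plane, μ = 1 and spinor part q = e^{θk}.) -/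
/-- The quaternion unit `i`. -/
def quatI : Quaternion ℝ := ⟨0, 1, 0, 0⟩

/-- The quaternion unit `j`. -/
def quatJ : Quaternion ℝ := ⟨0, 0, 1, 0⟩

theorem quatI_re : quatI.re = 0 := rfl
theorem quatI_imI : quatI.imI = 1 := rfl
theorem quatI_imJ : quatI.imJ = 0 := rfl
theorem quatI_imK : quatI.imK = 0 := rfl
theorem quatJ_re : quatJ.re = 0 := rfl
theorem quatJ_imI : quatJ.imI = 0 := rfl
theorem quatJ_imJ : quatJ.imJ = 1 := rfl
theorem quatJ_imK : quatJ.imK = 0 := rfl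
theorem quatK_re : quatK.re = 0 := rfl
theorem quatK_imI : quatK.imI = 0 := rfl
theorem quatK_imJ : quatK.imJ = 0 := rfl
theorem quatK_imK : quatK.imK = 1 := rfl

/-- The r-fixing automorphisms of the AdS superalgebra `osp(1|4)` form a circle:
the invariance conditions force `μ = 1`, `q = e^{θk}`, `a = cos 2θ` and
`b = sin 2θ`. -/
theorem stmt_19 (a b μ : ℝ) (q : Quaternion ℝ) (hq : q ≠ 0)
    (h₁ : μ • (q * quatK) = quatK * q)
    (h₂ : μ = Quaternion.normSq q)
    (h₃ : a • (q * quatI) - b • (q * quatJ) = quatI * q)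
    (h₄ : b • (q * quatI) + a • (q * quatJ) = quatJ * q) :
    μ = 1 ∧ ∃ θ : ℝ,
      q = ((Real.cos θ : ℝ) : Quaternion ℝ) + Real.sin θ • quatK ∧
      a = Real.cos (2 * θ) ∧ b = Real.sin (2 * θ) := by
  rw [Quaternion.normSq_def'] at h₂
  simp only [Quaternion.ext_iff, quatI_re, quatI_imI, quatI_imJ, quatI_imK, quatJ_re, quatJ_imI,
    quatJ_imJ, quatJ_imK, quatK_re, quatK_imI, quatK_imJ, quatK_imK,
    Quaternion.re_smul, Quaternion.imI_smul,
    Quaternion.imJ_smul, Quaternion.imK_smul, Quaternion.re_mul, Quaternion.imI_mul,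
    Quaternion.imJ_mul, Quaternion.imK_mul, Quaternion.re_sub, Quaternion.imI_sub,
    Quaternion.imJ_sub, Quaternion.imK_sub, smul_eq_mul] at h₁ h₂ h₃
  have hq' : ¬ (q.re = 0 ∧ q.imI = 0 ∧ q.imJ = 0 ∧ q.imK = 0) := by
    rintro ⟨r1, r2, r3, r4⟩
    exact hq (Quaternion.ext _ _ r1 r2 r3 r4)
  have key : ∀ t : ℝ, q.re = Real.cos t → q.imI = 0 → q.imJ = 0 → q.imK = Real.sin t →
      q = ((Real.cos t : ℝ) : Quaternion ℝ) + Real.sin t • quatK := by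
    intro t r1 r2 r3 r4
    apply Quaternion.ext <;> simp [quatK_re, quatK_imI, quatK_imJ, quatK_imK, r1, r2, r3, r4]
  clear h₄ hq
  suffices H : μ = 1 ∧ ∃ θ : ℝ, (q.re = Real.cos θ ∧ q.imI = 0 ∧ q.imJ = 0 ∧
      q.imK = Real.sin θ) ∧ a = Real.cos (2 * θ) ∧ b = Real.sin (2 * θ) by
    obtain ⟨H1, t, ⟨r1, r2, r3, r4⟩, H2⟩ := H
    exact ⟨H1, t, key t r1 r2 r3 r4, H2⟩
  clear key
  generalize q.re = w at *
  generalize q.imI = x at *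
  generalize q.imJ = y at *
  generalize q.imK = z at *
  obtain ⟨e1, e2, e3, e4⟩ := h₁
  obtain ⟨-, f2, f3, -⟩ := h₃
  have hμ : 0 ≤ μ := by rw [h₂]; positivity
  have hx : x = 0 := by
    have : (μ + 1) * x = 0 := by linarith
    rcases mul_eq_zero.1 this with h | h
    · linarith
    · exact h
  have hy : y = 0 := by
    have : (μ + 1) * y = 0 := by linarith
    rcases mul_eq_zero.1 this with h | h
    · linarith
    · exact h
  subst hx hy
  have hμ1 : μ = 1 := by
    by_contra hne
    have hne' : μ - 1 ≠ 0 := sub_ne_zero.2 hne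
    have hw : w = 0 := by
      have : (μ - 1) * w = 0 := by linarith
      exact (mul_eq_zero.1 this).resolve_left hne'
    have hz : z = 0 := by
      have : (μ - 1) * z = 0 := by linarith
      exact (mul_eq_zero.1 this).resolve_left hne'
    subst hw hz
    exact hq' ⟨rfl, rfl, rfl, rfl⟩
  refine ⟨hμ1, Complex.arg ⟨w, z⟩, ?_⟩
  have hn : w ^ 2 + z ^ 2 = 1 := by linarith
  have hnorm : ‖(⟨w, z⟩ : ℂ)‖ = 1 := by
    rw [Complex.norm_def, Complex.normSq_mk, Real.sqrt_eq_one]; linarith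
  have hc : Real.cos (Complex.arg ⟨w, z⟩) = w := by
    have := Complex.norm_mul_cos_arg ⟨w, z⟩
    rwa [hnorm, one_mul] at this
  have hs : Real.sin (Complex.arg ⟨w, z⟩) = z := by
    have := Complex.norm_mul_sin_arg ⟨w, z⟩
    rwa [hnorm, one_mul] at this
  rw [Real.cos_two_mul, Real.sin_two_mul, hc, hs]
  have g2 : a * w + b * z = w := by linarith
  have g3 : a * z - b * w = - z := by linarith
  refine ⟨?_, ?_, ?_⟩
  · exact ⟨rfl, rfl, rfl, rfl⟩
  · linear_combination w * g2 + z * g3 - (a + 1) * hn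
  · linear_combination z * g2 - w * g3 - b * hn
end
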